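/- In any implicit knowledge-based HMS model, for every individual i ∈ I and every event E: (1) A*_i(E) = A_i(E), where A*_i is the awareness operator defined from the awareness function α_i and A_i is the awareness operator defined from the derived explicit possibility correspondence Π*_i; and (2) K_i(E) = L*_i(E) ∩ A*_i(E), where K_i is the knowledge operator defined from Π*_i and L*_i is the implicit knowledge operator defined from Λ*_i. -/

import Mathlib

/-!
At `ω ∈ S Θ` the derived correspondence is the projection of `Λ*(ω) ⊆ S Θ` to the awareness level:
`Π*(ω) = (Λ*(ω))_{α(ω)}` (`DerivedPi.eq_image`). It is a nonempty subset of `S (α(ω))`, and since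
the spaces are disjoint, `S (α(ω))` is the only space containing it; this gives `A* = A`.

For knowledge, a state of `S (α(ω))` can lie in an event with base-space `S Φ` only if
`Φ ⊆ α(ω)`, so explicit knowledge implies awareness. Once `Φ ⊆ α(ω)`, the event contains a state
iff it contains its projection to `S (α(ω))` (`HMSFrame.r_mem_up_iff`), so `Π*(ω) ⊆ E` and
`Λ*(ω) ⊆ E` are equivalent.
-/

/-- The frame underlying HMS (Heifetz–Meier–Schipper) unawareness models: a complete
lattice of nonempty pairwise disjoint state spaces `S Φ` indexed by the subsets
`Φ ⊆ At` of atomic formulas (ordered by inclusion of the index), together with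
commuting surjective projections `r Φ Ψ : S Φ → S Ψ` for `Ψ ⊆ Φ`. -/
structure HMSFrame (At : Type*) (Ω : Type*) where
  S : Set At → Set Ω
  S_nonempty : ∀ Φ : Set At, (S Φ).Nonempty
  S_disjoint : ∀ ⦃Φ Φ' : Set At⦄, Φ ≠ Φ' → Disjoint (S Φ) (S Φ')
  S_cover : ∀ ω : Ω, ∃ Φ : Set At, ω ∈ S Φ
  r : Set At → Set At → Ω → Ω
  r_mem : ∀ ⦃Φ Ψ : Set At⦄, Ψ ⊆ Φ → ∀ ⦃ω : Ω⦄, ω ∈ S Φ → r Φ Ψ ω ∈ S Ψ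
  r_surjOn : ∀ ⦃Φ Ψ : Set At⦄, Ψ ⊆ Φ → Set.SurjOn (r Φ Ψ) (S Φ) (S Ψ)
  r_id : ∀ (Φ : Set At), ∀ ω ∈ S Φ, r Φ Φ ω = ω
  r_comp : ∀ ⦃Φ Ψ Υ : Set At⦄, Υ ⊆ Ψ → Ψ ⊆ Φ → ∀ ω ∈ S Φ, r Ψ Υ (r Φ Ψ ω) = r Φ Υ ω

variable {At Ω : Type*}

/-- `D^↑`, for a subset `D` of the space `S Φ`: all extensions of states in `D` to
(weakly) more expressive spaces. -/
def HMSFrame.up (F : HMSFrame At Ω) (Φ : Set At) (D : Set Ω) : Set Ω :=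
  {ω : Ω | ∃ Ψ : Set At, Φ ⊆ Ψ ∧ ω ∈ F.S Ψ ∧ F.r Ψ Φ ω ∈ D}

/-- `E` is an event with base-space `S Φ` (and base some `D ⊆ S Φ`). -/
def HMSFrame.IsEvent (F : HMSFrame At Ω) (Φ : Set At) (E : Set Ω) : Prop :=
  ∃ D, D ⊆ F.S Φ ∧ E = F.up Φ D

/-- Negation `¬E := (S Φ \ D)^↑` of an event `E` with base-space `S Φ`
(note `S Φ \ E = S Φ \ D` for an event `E` with base `D ⊆ S Φ`). -/
def HMSFrame.neg (F : HMSFrame At Ω) (Φ : Set At) (E : Set Ω) : Set Ω :=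
  F.up Φ (F.S Φ \ E)

/-- Properties of the (explicit) possibility correspondence of HMS models:
nonemptiness, Confinement, Generalized Reflexivity, Stationarity,
Projections Preserve Ignorance, and Projections Preserve Knowledge. -/
structure IsPossibility (F : HMSFrame At Ω) (Pi : Ω → Set Ω) : Prop where
  nonempty : ∀ ω : Ω, (Pi ω).Nonempty
  confinement : ∀ ⦃Φ : Set At⦄ ⦃ω : Ω⦄, ω ∈ F.S Φ → ∃ Ψ, Ψ ⊆ Φ ∧ Pi ω ⊆ F.S Ψ
  genRefl : ∀ ⦃Υ : Set At⦄ ⦃ω : Ω⦄, Pi ω ⊆ F.S Υ → ω ∈ F.up Υ (Pi ω)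
  stationarity : ∀ ⦃ω ω' : Ω⦄, ω' ∈ Pi ω → Pi ω' = Pi ω
  projIgnorance : ∀ ⦃Φ Ψ : Set At⦄ ⦃ω : Ω⦄, ω ∈ F.S Φ → Ψ ⊆ Φ →
    ∀ ⦃Υ Υ' : Set At⦄, Pi ω ⊆ F.S Υ → Pi (F.r Φ Ψ ω) ⊆ F.S Υ' →
      F.up Υ (Pi ω) ⊆ F.up Υ' (Pi (F.r Φ Ψ ω))
  projKnowledge : ∀ ⦃Φ Ψ Υ : Set At⦄ ⦃ω : Ω⦄, Υ ⊆ Ψ → Ψ ⊆ Φ → ω ∈ F.S Φ →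
    Pi ω ⊆ F.S Ψ → F.r Ψ Υ '' Pi ω = Pi (F.r Φ Υ ω)

/-- Properties of an implicit possibility correspondence `La` relative to the
explicit possibility correspondence `Pi`: Reflexivity, Stationarity, Projections
Preserve Implicit Knowledge (whose statement `(Λ(ω))_Ψ = Λ(ω_Ψ)` presupposes that
the projection of `Λ(ω)` is defined, i.e. `Λ(ω) ⊆ S Φ` for `ω ∈ S Φ`),
Explicit Measurability, and Implicit Measurability. -/
structure IsImplicit (F : HMSFrame At Ω) (Pi La : Ω → Set Ω) : Prop where
  refl : ∀ ω : Ω, ω ∈ La ω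
  stationarity : ∀ ⦃ω ω' : Ω⦄, ω' ∈ La ω → La ω' = La ω
  projImplicit : ∀ ⦃Φ : Set At⦄ ⦃ω : Ω⦄, ω ∈ F.S Φ →
    La ω ⊆ F.S Φ ∧ ∀ ⦃Ψ : Set At⦄, Ψ ⊆ Φ → F.r Φ Ψ '' La ω = La (F.r Φ Ψ ω)
  explicitMeas : ∀ ⦃ω ω' : Ω⦄, ω' ∈ La ω → Pi ω' = Pi ω
  implicitMeas : ∀ ⦃Φ Ψ : Set At⦄ ⦃ω ω' : Ω⦄, ω ∈ F.S Φ → Pi ω ⊆ F.S Ψ →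
    ω' ∈ Pi ω → La ω' = F.r Φ Ψ '' La ω

/-- Properties of the primitive implicit possibility correspondence `La` of an
implicit knowledge-based HMS model: nonemptiness, Reflexivity, Stationarity, and
Projections Preserve Implicit Knowledge. -/
structure IsImplicitStar (F : HMSFrame At Ω) (La : Ω → Set Ω) : Prop where
  nonempty : ∀ ω : Ω, (La ω).Nonempty
  refl : ∀ ω : Ω, ω ∈ La ω
  stationarity : ∀ ⦃ω ω' : Ω⦄, ω' ∈ La ω → La ω' = La ω
  projImplicit : ∀ ⦃Φ : Set At⦄ ⦃ω : Ω⦄, ω ∈ F.S Φ →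
    La ω ⊆ F.S Φ ∧ ∀ ⦃Ψ : Set At⦄, Ψ ⊆ Φ → F.r Φ Ψ '' La ω = La (F.r Φ Ψ ω)

/-- Property (O) (Lack of Conception): the awareness level at `ω ∈ S Φ` (encoded
by its index `al ω ⊆ At`, so that the awareness level is the space `S (al ω)`)
is weakly less expressive than `S Φ`. -/
def PropO (F : HMSFrame At Ω) (al : Ω → Set At) : Prop :=
  ∀ ⦃Φ : Set At⦄ ⦃ω : Ω⦄, ω ∈ F.S Φ → al ω ⊆ Φ

/-- Property (I) (Awareness Measurability). -/
def PropI (F : HMSFrame At Ω) (La : Ω → Set Ω) (al : Ω → Set At) : Prop :=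
  ∀ ⦃ω ω' : Ω⦄, ω' ∈ La ω → al ω' = al ω

/-- Property (II): if `ω ∈ S Φ` and `S Ψ ⪯ α(ω)` then `α(ω_Ψ) = S Ψ`. -/
def PropII (F : HMSFrame At Ω) (al : Ω → Set At) : Prop :=
  ∀ ⦃Φ Ψ : Set At⦄ ⦃ω : Ω⦄, ω ∈ F.S Φ → Ψ ⊆ al ω → Ψ ⊆ Φ → al (F.r Φ Ψ ω) = Ψ

/-- Property (III): if `ω ∈ S Φ` and `α(ω) ⪯ S Ψ ⪯ S Φ` then `α(ω_Ψ) = α(ω)`. -/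
def PropIII (F : HMSFrame At Ω) (al : Ω → Set At) : Prop :=
  ∀ ⦃Φ Ψ : Set At⦄ ⦃ω : Ω⦄, ω ∈ F.S Φ → al ω ⊆ Ψ → Ψ ⊆ Φ → al (F.r Φ Ψ ω) = al ω

/-- Property (IV): if `ω ∈ S Φ` and `Ψ ⊆ Φ` then `α(ω) ⪰ α(ω_Ψ)`. -/
def PropIV (F : HMSFrame At Ω) (al : Ω → Set At) : Prop :=
  ∀ ⦃Φ Ψ : Set At⦄ ⦃ω : Ω⦄, ω ∈ F.S Φ → Ψ ⊆ Φ → al (F.r Φ Ψ ω) ⊆ al ω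

/-- `PiS` is the explicit possibility correspondence derived from the implicit
possibility correspondence `La` and the awareness function `al`:
`Π*(ω_Ψ) := (Λ*(ω))_{α(ω_Ψ)}` for all `ω ∈ S Φ` and `Ψ ⊆ Φ`. -/
def DerivedPi (F : HMSFrame At Ω) (La : Ω → Set Ω) (al : Ω → Set At)
    (PiS : Ω → Set Ω) : Prop :=
  ∀ ⦃Φ Ψ : Set At⦄ ⦃ω : Ω⦄, ω ∈ F.S Φ → Ψ ⊆ Φ →
    PiS (F.r Φ Ψ ω) = F.r Φ (al (F.r Φ Ψ ω)) '' La ω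

/-- The (explicit) knowledge operator `K(E) := {ω : Π(ω) ⊆ E}` (as a set this
agrees with the definition with default value `∅^{S(E)}` on the vacuous case). -/
def Kop (F : HMSFrame At Ω) (Pi : Ω → Set Ω) (E : Set Ω) : Set Ω :=
  {ω : Ω | Pi ω ⊆ E}

/-- The implicit knowledge operator `L(E) := {ω : Λ(ω) ⊆ E}`. -/
def Lop (F : HMSFrame At Ω) (La : Ω → Set Ω) (E : Set Ω) : Set Ω :=
  {ω : Ω | La ω ⊆ E}

/-- The awareness operator `A(E) := {ω : S_{Π(ω)} ⪰ S(E)}`, applied to an event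
with base-space `S Φ`. -/
def Aop (F : HMSFrame At Ω) (Pi : Ω → Set Ω) (Φ : Set At) : Set Ω :=
  {ω : Ω | ∃ Ψ : Set At, Φ ⊆ Ψ ∧ Pi ω ⊆ F.S Ψ}

/-- The unawareness operator `U(E) := ¬A(E)`, applied to an event with
base-space `S Φ` (recall `A(E)` is an `S(E)`-based event). -/
def Uop (F : HMSFrame At Ω) (Pi : Ω → Set Ω) (Φ : Set At) : Set Ω :=
  F.neg Φ (Aop F Pi Φ)

/-- The awareness operator `A*(E) := {ω : α(ω) ⪰ S(E)}` defined from the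
awareness function, applied to an event with base-space `S Φ`. -/
def AopStar (al : Ω → Set At) (Φ : Set At) : Set Ω :=
  {ω : Ω | Φ ⊆ al ω}

/-- An HMS model: the frame together with a possibility correspondence for each
individual and a valuation mapping each atomic formula to an event. -/
structure HMSModel (At Ω I : Type*) extends HMSFrame At Ω where
  Pi : I → Ω → Set Ω
  Pi_poss : ∀ i : I, IsPossibility toHMSFrame (Pi i)
  val : At → Set Ω
  val_event : ∀ p : At, ∃ Φ : Set At, toHMSFrame.IsEvent Φ (val p)

/-- A complemented HMS model: an HMS model together with an implicit possibility
correspondence for each individual. -/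
structure CompHMSModel (At Ω I : Type*) extends HMSModel At Ω I where
  La : I → Ω → Set Ω
  La_impl : ∀ i : I, IsImplicit toHMSModel.toHMSFrame (Pi i) (La i)

/-- An implicit knowledge-based HMS model: the frame together with, for each
individual, a primitive implicit possibility correspondence and an awareness
function satisfying (O)-(IV), and a valuation mapping atoms to events. -/
structure ImpHMSModel (At Ω I : Type*) extends HMSFrame At Ω where
  LaS : I → Ω → Set Ω
  LaS_impl : ∀ i : I, IsImplicitStar toHMSFrame (LaS i)
  al : I → Ω → Set At
  al_O : ∀ i : I, PropO toHMSFrame (al i)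
  al_I : ∀ i : I, PropI toHMSFrame (LaS i) (al i)
  al_II : ∀ i : I, PropII toHMSFrame (al i)
  al_III : ∀ i : I, PropIII toHMSFrame (al i)
  al_IV : ∀ i : I, PropIV toHMSFrame (al i)
  val : At → Set Ω
  val_event : ∀ p : At, ∃ Φ : Set At, toHMSFrame.IsEvent Φ (val p)

theorem HMSFrame.index_unique (F : HMSFrame At Ω) {Φ Ψ : Set At} {ω : Ω}
    (h : ω ∈ F.S Φ) (h' : ω ∈ F.S Ψ) : Φ = Ψ := by
  by_contra hne
  exact Set.disjoint_left.mp (F.S_disjoint hne) h h'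

/-- A state of `S Θ` can lie in an event with base-space `S Φ` only if `Φ ⊆ Θ`, and then its
projection to `S Φ` decides. -/
theorem HMSFrame.mem_up_iff (F : HMSFrame At Ω) {Φ Θ : Set At} {D : Set Ω} {ω : Ω}
    (hω : ω ∈ F.S Θ) : ω ∈ F.up Φ D ↔ Φ ⊆ Θ ∧ F.r Θ Φ ω ∈ D := by
  constructor
  · rintro ⟨Ψ, hΨ, hωΨ, hD⟩
    obtain rfl := F.index_unique hω hωΨ
    exact ⟨hΨ, hD⟩
  · rintro ⟨hΘ, hD⟩
    exact ⟨Θ, hΘ, hω, hD⟩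

/-- An event with base-space below `S Ψ` contains a state iff it contains its projection to
`S Ψ`: projections compose. -/
theorem HMSFrame.r_mem_up_iff (F : HMSFrame At Ω) {Φ Ψ Θ : Set At} {D : Set Ω} {ω : Ω}
    (hω : ω ∈ F.S Θ) (hΨ : Ψ ⊆ Θ) (hΦ : Φ ⊆ Ψ) :
    F.r Θ Ψ ω ∈ F.up Φ D ↔ ω ∈ F.up Φ D := by
  rw [F.mem_up_iff (F.r_mem hΨ hω), F.mem_up_iff hω, F.r_comp hΦ hΨ ω hω]
  exact and_congr_left fun _ => ⟨fun h => h.trans hΨ, fun _ => hΦ⟩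

/-- The defining equation of `Π*` at the state itself, i.e. with the identity projection. -/
theorem DerivedPi.eq_image {F : HMSFrame At Ω} {La : Ω → Set Ω} {al : Ω → Set At}
    {PiS : Ω → Set Ω} (h : DerivedPi F La al PiS) {Θ : Set At} {ω : Ω} (hω : ω ∈ F.S Θ) :
    PiS ω = F.r Θ (al ω) '' La ω := by
  have := h hω (subset_refl Θ)
  rwa [F.r_id Θ ω hω] at this

/-- In any implicit knowledge-based HMS model, for every individual
`i ∈ I` and every event `E` (with base-space `S_Φ`):
(1) `A*_i(E) = A_i(E)`, where `A*_i` is defined from the awareness function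
`α_i` and `A_i` is defined from the derived explicit possibility correspondence
`Π*_i`; and (2) `K_i(E) = L*_i(E) ∩ A*_i(E)`, where `K_i` is defined from `Π*_i`
and `L*_i` is the implicit knowledge operator defined from `Λ*_i`. -/
theorem derived_operators_agree
    {At Ω I : Type*} [Nonempty At] [Nonempty I]
    (M : ImpHMSModel At Ω I) (i : I) (PiS : Ω → Set Ω)
    (hPiS : DerivedPi M.toHMSFrame (M.LaS i) (M.al i) PiS)
    (Φ : Set At) (E : Set Ω) (hE : M.toHMSFrame.IsEvent Φ E) :
    AopStar (M.al i) Φ = Aop M.toHMSFrame PiS Φ ∧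
    Kop M.toHMSFrame PiS E = Lop M.toHMSFrame (M.LaS i) E ∩ AopStar (M.al i) Φ := by
  obtain ⟨D, -, rfl⟩ := hE
  constructor
  · ext ω
    obtain ⟨Θ, hΘ⟩ := M.S_cover ω
    have hal : M.al i ω ⊆ Θ := M.al_O i hΘ
    have hLa := ((M.LaS_impl i).projImplicit hΘ).1
    simp only [AopStar, Aop, Set.mem_setOf_eq, hPiS.eq_image hΘ]
    constructor
    · intro h
      refine ⟨_, h, ?_⟩
      rintro _ ⟨ω', hω', rfl⟩
      exact M.r_mem hal (hLa hω')
    · rintro ⟨Ψ, hΨ, hsub⟩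
      -- the projection of `ω` itself witnesses that the space containing `Π*(ω)` is `S (α(ω))`
      have hmem := hsub ⟨ω, (M.LaS_impl i).refl ω, rfl⟩
      rwa [M.toHMSFrame.index_unique (M.r_mem hal hΘ) hmem]
  · ext ω
    obtain ⟨Θ, hΘ⟩ := M.S_cover ω
    have hal : M.al i ω ⊆ Θ := M.al_O i hΘ
    have hLa := ((M.LaS_impl i).projImplicit hΘ).1
    simp only [Kop, Lop, AopStar, Set.mem_inter_iff, Set.mem_setOf_eq, hPiS.eq_image hΘ,
      Set.image_subset_iff]
    constructor
    · intro h
      have haw : Φ ⊆ M.al i ω :=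
        ((M.toHMSFrame.mem_up_iff (M.r_mem hal hΘ)).mp (h ((M.LaS_impl i).refl ω))).1
      exact ⟨fun ω' hω' => (M.toHMSFrame.r_mem_up_iff (hLa hω') hal haw).mp (h hω'), haw⟩
    · rintro ⟨h, haw⟩ ω' hω'
      exact (M.toHMSFrame.r_mem_up_iff (hLa hω') hal haw).mpr (h hω')
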